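/- Fix θ ∈ Θ_M° and let ψ_μ, ψ_σ, ψ_α, ψ_β denote the partial derivatives of the cumulant ψ(t;θ) = log φ(t;θ) with respect to μ, σ, α, β. If a = (a₁,a₂,a₃,a₄) ∈ ℝ⁴ satisfies a₁ψ_μ(t) + a₂ψ_σ(t) + a₃ψ_α(t) + a₄ψ_β(t) = 0 for all t ≠ 0, then a = 0; that is, the four cumulant derivatives are linearly independent as functions of t. This holds in all cases α ≠ 1, α = 1, β = 0 and β ≠ 0. -/

import Mathlib

open MeasureTheory Filter

noncomputable section

def ThetaInt : Set (Fin 4 → ℝ) :=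
  {θ | 0 < θ 1 ∧ θ 2 ∈ Set.Ioo (0:ℝ) 2 ∧ θ 3 ∈ Set.Ioo (-1:ℝ) 1}

/-- Cumulant (log characteristic function) of the continuous (M₀) parameterization,
with `θ = (μ, σ, α, β)`. -/
def psiM (θ : Fin 4 → ℝ) (t : ℝ) : ℂ :=
  if θ 2 = 1 then
    ((-(|θ 1 * t|) : ℝ) : ℂ)
      - Complex.I * (((2 * θ 3 / Real.pi) * (θ 1 * t) * Real.log |θ 1 * t| : ℝ) : ℂ)
      + Complex.I * ((θ 0 * t : ℝ) : ℂ)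
  else
    ((-(|θ 1 * t| ^ (θ 2)) : ℝ) : ℂ) *
        (1 + Complex.I * ((θ 3 * Real.sign t * Real.tan (Real.pi * θ 2 / 2)
            * (|θ 1 * t| ^ (1 - θ 2) - 1) : ℝ) : ℂ))
      + Complex.I * ((θ 0 * t : ℝ) : ℂ)

/-- Characteristic function of the (M₀) parameterization. -/
def phiM (θ : Fin 4 → ℝ) (t : ℝ) : ℂ := Complex.exp (psiM θ t)

/-- Stable density in the (M₀) parameterization, via Fourier inversion. -/
def fM (θ : Fin 4 → ℝ) (x : ℝ) : ℝ :=
  (1 / (2 * Real.pi)) *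
    (∫ t : ℝ, Complex.exp (-Complex.I * (t : ℂ) * (x : ℂ)) * phiM θ t).re

/-- Partial derivative of the density in parameter `i`. -/
def fP (i : Fin 4) (θ : Fin 4 → ℝ) (x : ℝ) : ℝ :=
  deriv (fun s => fM (Function.update θ i s) x) (θ i)

/-- Second partial derivative of the density in parameters `i`, `j`. -/
def fPP (i j : Fin 4) (θ : Fin 4 → ℝ) (x : ℝ) : ℝ :=
  deriv (fun s => fP i (Function.update θ j s) x) (θ j)

/-- Derivative of the density in `x`. -/
def fX (θ : Fin 4 → ℝ) (x : ℝ) : ℝ := deriv (fun y => fM θ y) x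

/-- Mixed derivative `∂²f/∂x∂θᵢ`. -/
def fPX (i : Fin 4) (θ : Fin 4 → ℝ) (x : ℝ) : ℝ := deriv (fun y => fP i θ y) x

/-- Score functions. -/
def ellP (i : Fin 4) (θ : Fin 4 → ℝ) (x : ℝ) : ℝ := fP i θ x / fM θ x

/-- Derivative of the score in `x`. -/
def ellPX (i : Fin 4) (θ : Fin 4 → ℝ) (x : ℝ) : ℝ := deriv (fun y => ellP i θ y) x

/-- Derivative of the score `ℓ_{θᵢ}` in the parameter `θⱼ`. -/
def ellPP (i j : Fin 4) (θ : Fin 4 → ℝ) (x : ℝ) : ℝ :=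
  deriv (fun s => ellP i (Function.update θ j s) x) (θ j)

/-- `h = O(r)` as `|x| → ∞`. -/
def IsBigOAtInfty (h r : ℝ → ℝ) : Prop :=
  ∃ c > 0, ∃ M > 0, ∀ x : ℝ, M ≤ |x| → |h x| ≤ c * r x


/-- Partial derivative of the cumulant `ψ` in the parameter `θᵢ` (at `α = 1` this is the
derivative of the continuous parameterization, i.e. the limit of the `α ≠ 1` expressions). -/
def psiP (i : Fin 4) (θ : Fin 4 → ℝ) (t : ℝ) : ℂ :=
  deriv (fun s => psiM (Function.update θ i s) t) (θ i)

end

/-!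
For `t > 0` put `u = σt`. Then `ψ(t) = -u ^ α + i (μt - βu L_α(u))`, where `L_α` deforms
`L_1 = (2 / π) log`. The derivatives `ψ_μ = it` and `ψ_β = -iuL_α(u)` are purely imaginary,
while `ψ_σ` and `ψ_α` have real parts `-(α / σ)u ^ α` and `-u ^ α log u`. The real part of a
linear relation is therefore `-u ^ α` times an affine function of `log u`; two frequencies force it
to vanish identically, and what is left of the imaginary part is `t` times an affine function of
`L_α(u)`. As `L_α` is injective, the same two frequencies annihilate the remaining coefficients.

The delicate point is that `ψ` is differentiable in `α` at `α = 1`, where `tan (πα / 2)` has a pole: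
up to the factor `-sin (πα / 2)`, `L_α(u)` is the quotient of the divided differences at `1` of the
analytic functions `u ^ (α - 1)` and `cos (πα / 2)` of `α`.
-/

theorem eq_zero_and_eq_zero_of_add_mul_eq_zero {R : Type*} [Ring R] [NoZeroDivisors R]
    {p q x y : R} (hxy : x ≠ y) (hx : p + q * x = 0) (hy : p + q * y = 0) : p = 0 ∧ q = 0 := by
  have hq : q * (x - y) = 0 := by
    rw [mul_sub, ← add_sub_add_left_eq_sub _ _ p, hx, hy, sub_zero]
  obtain rfl : q = 0 := (mul_eq_zero.1 hq).resolve_right (sub_ne_zero.2 hxy)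
  exact ⟨by simpa using hx, rfl⟩

theorem hasDerivAt_complex_mk {x y : ℝ → ℝ} {x' y' s : ℝ} (hx : HasDerivAt x x' s)
    (hy : HasDerivAt y y' s) : HasDerivAt (fun r ↦ (⟨x r, y r⟩ : ℂ)) ⟨x', y'⟩ s := by
  simp only [Complex.mk_eq_add_mul_I]
  exact hx.ofReal_comp.add (hy.ofReal_comp.mul_const Complex.I)

theorem differentiableAt_dslope_of_analyticAt {𝕜 E : Type*} [NontriviallyNormedField 𝕜]
    [NormedAddCommGroup E] [NormedSpace 𝕜 E] {f : 𝕜 → E} {a b : 𝕜} (ha : AnalyticAt 𝕜 f a)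
    (hb : DifferentiableAt 𝕜 f b) : DifferentiableAt 𝕜 (dslope f a) b := by
  obtain rfl | hba := eq_or_ne b a
  · obtain ⟨p, hp⟩ := ha
    exact hp.has_fpower_series_dslope_fslope.analyticAt.differentiableAt
  · exact (differentiableAt_dslope_of_ne hba).2 hb

theorem cos_pi_mul_div_two_ne_zero {α : ℝ} (hα : α ∈ Set.Ioo 0 2) (hα₁ : α ≠ 1) :
    Real.cos (Real.pi * α / 2) ≠ 0 := by
  have hpi := Real.pi_pos
  obtain ⟨h₀, h₂⟩ := hα
  obtain h | h := lt_or_gt_of_ne hα₁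
  · exact (Real.cos_pos_of_mem_Ioo ⟨by nlinarith, by nlinarith⟩).ne'
  · exact (Real.cos_neg_of_pi_div_two_lt_of_lt (by nlinarith) (by nlinarith)).ne

theorem tan_pi_mul_div_two_ne_zero {α : ℝ} (hα : α ∈ Set.Ioo 0 2) (hα₁ : α ≠ 1) :
    Real.tan (Real.pi * α / 2) ≠ 0 := by
  have hpi := Real.pi_pos
  have hsin : 0 < Real.sin (Real.pi * α / 2) :=
    Real.sin_pos_of_pos_of_lt_pi (by nlinarith [hα.1]) (by nlinarith [hα.2])
  rw [Real.tan_eq_sin_div_cos]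
  exact div_ne_zero hsin.ne' (cos_pi_mul_div_two_ne_zero hα hα₁)

/-- The function `L_α` in `ψ(t) = -u ^ α + i (μt - βu L_α(u))`, `u = σt > 0`: it carries the
skewness of the stable law, and its value at `α = 1` is the limit of the values at `α ≠ 1`. -/
noncomputable def skewLog (α u : ℝ) : ℝ :=
  if α = 1 then 2 / Real.pi * Real.log u else Real.tan (Real.pi * α / 2) * (1 - u ^ (α - 1))

theorem skewLog_injOn {α : ℝ} (hα : α ∈ Set.Ioo 0 2) : Set.InjOn (skewLog α) (Set.Ioi 0) := by
  intro u hu v hv huv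
  by_cases hα₁ : α = 1
  · simp only [skewLog, if_pos hα₁] at huv
    exact Real.log_injOn_pos hu hv (mul_left_cancel₀ (by positivity) huv)
  · simp only [skewLog, if_neg hα₁] at huv
    have hpow : u ^ (α - 1) = v ^ (α - 1) :=
      sub_right_injective (mul_left_cancel₀ (tan_pi_mul_div_two_ne_zero hα hα₁) huv)
    exact (Real.rpow_left_inj (le_of_lt hu) (le_of_lt hv) (sub_ne_zero.2 hα₁)).1 hpow

theorem differentiableAt_skewLog (α : ℝ) {u : ℝ} (hu : u ≠ 0) :
    DifferentiableAt ℝ (skewLog α) u := by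
  unfold skewLog
  split_ifs
  · exact (Real.differentiableAt_log hu).const_mul _
  · exact ((Real.differentiableAt_rpow_const_of_ne _ hu).const_sub _).const_mul _

theorem hasDerivAt_cos_pi_mul_div_two_one :
    HasDerivAt (fun s : ℝ ↦ Real.cos (Real.pi * s / 2)) (-(Real.pi / 2)) 1 := by
  simpa using (((hasDerivAt_id (1 : ℝ)).const_mul Real.pi).div_const 2).cos

theorem hasDerivAt_rpow_sub_one {u : ℝ} (hu : 0 < u) :
    HasDerivAt (fun s : ℝ ↦ u ^ (s - 1)) (Real.log u) 1 := by
  simpa using ((hasDerivAt_id (1 : ℝ)).sub_const 1).const_rpow hu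

theorem skewLog_eq_dslope_div_dslope (α : ℝ) {u : ℝ} (hu : 0 < u) :
    skewLog α u = -Real.sin (Real.pi * α / 2) * (dslope (fun s ↦ u ^ (s - 1)) 1 α /
      dslope (fun s ↦ Real.cos (Real.pi * s / 2)) 1 α) := by
  obtain rfl | hα := eq_or_ne α 1
  · rw [dslope_same, dslope_same, (hasDerivAt_rpow_sub_one hu).deriv,
      hasDerivAt_cos_pi_mul_div_two_one.deriv, mul_one, Real.sin_pi_div_two, skewLog, if_pos rfl]
    field_simp
  · rw [dslope_of_ne _ hα, dslope_of_ne _ hα, slope_def_field, slope_def_field,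
      div_div_div_cancel_right₀ (sub_ne_zero.2 hα), skewLog, if_neg hα, Real.tan_eq_sin_div_cos,
      sub_self, Real.rpow_zero, mul_one, Real.cos_pi_div_two]
    ring

theorem dslope_cos_pi_mul_div_two_ne_zero {α : ℝ} (hα : α ∈ Set.Ioo 0 2) :
    dslope (fun s ↦ Real.cos (Real.pi * s / 2)) 1 α ≠ 0 := by
  obtain rfl | hα₁ := eq_or_ne α 1
  · rw [dslope_same, hasDerivAt_cos_pi_mul_div_two_one.deriv, neg_ne_zero]
    positivity
  · rw [dslope_of_ne _ hα₁, slope_def_field, mul_one, Real.cos_pi_div_two, sub_zero]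
    exact div_ne_zero (cos_pi_mul_div_two_ne_zero hα hα₁) (sub_ne_zero.2 hα₁)

theorem differentiableAt_skewLog_left {α u : ℝ} (hα : α ∈ Set.Ioo 0 2) (hu : 0 < u) :
    DifferentiableAt ℝ (fun s ↦ skewLog s u) α := by
  have hdslope {f : ℝ → ℝ} (hf : ∀ s, AnalyticAt ℝ f s) : DifferentiableAt ℝ (dslope f 1) α :=
    differentiableAt_dslope_of_analyticAt (hf 1) (hf α).differentiableAt
  have hpow : ∀ s, AnalyticAt ℝ (fun s : ℝ ↦ u ^ (s - 1)) s := by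
    simp only [Real.rpow_def_of_pos hu]
    fun_prop
  have hcos : ∀ s, AnalyticAt ℝ (fun s : ℝ ↦ Real.cos (Real.pi * s / 2)) s := by fun_prop
  simp only [skewLog_eq_dslope_div_dslope _ hu]
  exact DifferentiableAt.mul (by fun_prop)
    ((hdslope hpow).div (hdslope hcos) (dslope_cos_pi_mul_div_two_ne_zero hα))

theorem rpow_mul_rpow_one_sub_sub_one {u : ℝ} (hu : 0 < u) (α : ℝ) :
    u ^ α * (u ^ (1 - α) - 1) = u * (1 - u ^ (α - 1)) := by
  rw [mul_sub_one, mul_one_sub, ← Real.rpow_add hu, add_sub_cancel, Real.rpow_one,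
    Real.rpow_sub_one hu.ne', mul_div_cancel₀ _ hu.ne']

section Cumulant

variable {θ : Fin 4 → ℝ} {t : ℝ}

theorem psiM_of_pos (hσ : 0 < θ 1) (ht : 0 < t) :
    psiM θ t = ⟨-(θ 1 * t) ^ θ 2, θ 0 * t - θ 3 * (θ 1 * t * skewLog (θ 2) (θ 1 * t))⟩ := by
  have hu : 0 < θ 1 * t := mul_pos hσ ht
  rw [psiM, skewLog, abs_of_pos hu, Real.sign_of_pos ht]
  split_ifs with hα
  · apply Complex.ext
    · simp [hα]
    · simp only [Complex.add_im, Complex.sub_im, Complex.I_mul_im, Complex.ofReal_im,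
        Complex.ofReal_re]
      ring
  · apply Complex.ext
    · simp [-Complex.ofReal_mul]
    · simp only [Complex.add_im, Complex.im_ofReal_mul, Complex.one_im, Complex.I_mul_im,
        Complex.ofReal_re]
      linear_combination -θ 3 * Real.tan (Real.pi * θ 2 / 2) *
        rpow_mul_rpow_one_sub_sub_one hu (θ 2)

theorem psiP_eq_of_eventuallyEq {i : Fin 4} {x y : ℝ → ℝ} {x' y' : ℝ}
    (hψ : ∀ᶠ s in nhds (θ i), psiM (Function.update θ i s) t = ⟨x s, y s⟩)
    (hx : HasDerivAt x x' (θ i)) (hy : HasDerivAt y y' (θ i)) : psiP i θ t = ⟨x', y'⟩ :=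
  ((hasDerivAt_complex_mk hx hy).congr_of_eventuallyEq hψ).deriv

theorem psiP_zero (hσ : 0 < θ 1) (ht : 0 < t) : psiP 0 θ t = ⟨0, t⟩ := by
  have hψ (s : ℝ) : psiM (Function.update θ 0 s) t =
      ⟨-(θ 1 * t) ^ θ 2, s * t - θ 3 * (θ 1 * t * skewLog (θ 2) (θ 1 * t))⟩ := by
    simp [psiM_of_pos (θ := Function.update θ 0 s) hσ ht]
  exact psiP_eq_of_eventuallyEq (.of_forall hψ) (hasDerivAt_const _ _)
    ((hasDerivAt_mul_const t).sub_const _)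

theorem re_psiP_one (hσ : 0 < θ 1) (ht : 0 < t) :
    (psiP 1 θ t).re = -(θ 2 / θ 1 * (θ 1 * t) ^ θ 2) := by
  have hu : 0 < θ 1 * t := mul_pos hσ ht
  have hψ : ∀ᶠ s in nhds (θ 1), psiM (Function.update θ 1 s) t =
      ⟨-(s * t) ^ θ 2, θ 0 * t - θ 3 * (s * t * skewLog (θ 2) (s * t))⟩ := by
    filter_upwards [lt_mem_nhds hσ] with s hs
    simp [psiM_of_pos (θ := Function.update θ 1 s) (by simpa using hs) ht]
  have hre : HasDerivAt (fun s ↦ -(s * t) ^ θ 2) (-(t * θ 2 * (θ 1 * t) ^ (θ 2 - 1))) (θ 1) :=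
    ((hasDerivAt_mul_const t).rpow_const (.inl hu.ne')).neg
  have hskew : DifferentiableAt ℝ (fun s ↦ skewLog (θ 2) (s * t)) (θ 1) :=
    (differentiableAt_skewLog (θ 2) hu.ne').comp (θ 1) (f := fun s ↦ s * t) (by fun_prop)
  have him : DifferentiableAt ℝ
      (fun s ↦ θ 0 * t - θ 3 * (s * t * skewLog (θ 2) (s * t))) (θ 1) := by fun_prop
  rw [psiP_eq_of_eventuallyEq hψ hre him.hasDerivAt, Real.rpow_sub_one hu.ne']
  field_simp

theorem re_psiP_two (hσ : 0 < θ 1) (hα : θ 2 ∈ Set.Ioo 0 2) (ht : 0 < t) :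
    (psiP 2 θ t).re = -((θ 1 * t) ^ θ 2 * Real.log (θ 1 * t)) := by
  have hu : 0 < θ 1 * t := mul_pos hσ ht
  have hψ (s : ℝ) : psiM (Function.update θ 2 s) t =
      ⟨-(θ 1 * t) ^ s, θ 0 * t - θ 3 * (θ 1 * t * skewLog s (θ 1 * t))⟩ := by
    simp [psiM_of_pos (θ := Function.update θ 2 s) hσ ht]
  have hre : HasDerivAt (fun s ↦ -(θ 1 * t) ^ s) (-((θ 1 * t) ^ θ 2 * Real.log (θ 1 * t))) (θ 2) :=
    (Real.hasStrictDerivAt_const_rpow hu (θ 2)).hasDerivAt.neg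
  have him : DifferentiableAt ℝ
      (fun s ↦ θ 0 * t - θ 3 * (θ 1 * t * skewLog s (θ 1 * t))) (θ 2) :=
    (((differentiableAt_skewLog_left hα hu).const_mul _).const_mul _).const_sub _
  rw [psiP_eq_of_eventuallyEq (.of_forall hψ) hre him.hasDerivAt]

theorem psiP_three (hσ : 0 < θ 1) (ht : 0 < t) :
    psiP 3 θ t = ⟨0, -(θ 1 * t * skewLog (θ 2) (θ 1 * t))⟩ := by
  have hψ (s : ℝ) : psiM (Function.update θ 3 s) t =
      ⟨-(θ 1 * t) ^ θ 2, θ 0 * t - s * (θ 1 * t * skewLog (θ 2) (θ 1 * t))⟩ := by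
    simp [psiM_of_pos (θ := Function.update θ 3 s) hσ ht]
  exact psiP_eq_of_eventuallyEq (.of_forall hψ) (hasDerivAt_const _ _)
    ((hasDerivAt_mul_const _).const_sub _)

variable {a : Fin 4 → ℝ}

theorem re_sum_mul_psiP (hσ : 0 < θ 1) (hα : θ 2 ∈ Set.Ioo 0 2) (ht : 0 < t) :
    (∑ i, (a i : ℂ) * psiP i θ t).re =
      -(θ 1 * t) ^ θ 2 * (a 1 * (θ 2 / θ 1) + a 2 * Real.log (θ 1 * t)) := by
  simp only [Fin.sum_univ_four, Complex.add_re, Complex.re_ofReal_mul, psiP_zero hσ ht,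
    re_psiP_one hσ ht, re_psiP_two hσ hα ht, psiP_three hσ ht]
  ring

theorem im_sum_mul_psiP (hσ : 0 < θ 1) (ht : 0 < t) (ha₁ : a 1 = 0) (ha₂ : a 2 = 0) :
    (∑ i, (a i : ℂ) * psiP i θ t).im =
      t * (a 0 + -(a 3 * θ 1) * skewLog (θ 2) (θ 1 * t)) := by
  simp only [Fin.sum_univ_four, Complex.add_im, Complex.im_ofReal_mul, psiP_zero hσ ht,
    psiP_three hσ ht, ha₁, ha₂]
  ring

end Cumulant

theorem cumulant_derivs_linearIndependent_general {θ : Fin 4 → ℝ} (hσ : 0 < θ 1)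
    (hα : θ 2 ∈ Set.Ioo 0 2) {a : Fin 4 → ℝ} {s t : ℝ} (hs : 0 < s) (ht : 0 < t) (hst : s ≠ t)
    (has : ∑ i, (a i : ℂ) * psiP i θ s = 0) (hat : ∑ i, (a i : ℂ) * psiP i θ t = 0) : a = 0 := by
  have hne : θ 1 * s ≠ θ 1 * t := (mul_right_injective₀ hσ.ne').ne hst
  have hre {r : ℝ} (hr : 0 < r) (har : ∑ i, (a i : ℂ) * psiP i θ r = 0) :
      a 1 * (θ 2 / θ 1) + a 2 * Real.log (θ 1 * r) = 0 := by
    have hmul := (re_sum_mul_psiP hσ hα hr).symm.trans (congrArg Complex.re har)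
    exact (mul_eq_zero.1 hmul).resolve_left (neg_ne_zero.2 (by positivity))
  obtain ⟨ha₁, ha₂⟩ := eq_zero_and_eq_zero_of_add_mul_eq_zero
    (Real.log_injOn_pos.ne (mul_pos hσ hs) (mul_pos hσ ht) hne) (hre hs has) (hre ht hat)
  replace ha₁ : a 1 = 0 := (mul_eq_zero.1 ha₁).resolve_right (div_pos hα.1 hσ).ne'
  have him {r : ℝ} (hr : 0 < r) (har : ∑ i, (a i : ℂ) * psiP i θ r = 0) :
      a 0 + -(a 3 * θ 1) * skewLog (θ 2) (θ 1 * r) = 0 := by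
    have hmul := (im_sum_mul_psiP hσ hr ha₁ ha₂).symm.trans (congrArg Complex.im har)
    exact (mul_eq_zero.1 hmul).resolve_left hr.ne'
  obtain ⟨ha₀, ha₃⟩ := eq_zero_and_eq_zero_of_add_mul_eq_zero
    ((skewLog_injOn hα).ne (mul_pos hσ hs) (mul_pos hσ ht) hne) (him hs has) (him ht hat)
  replace ha₃ : a 3 = 0 := (mul_eq_zero.1 (neg_eq_zero.1 ha₃)).resolve_right hσ.ne'
  funext i
  fin_cases i <;> assumption

/-- The cumulant derivatives `ψ_μ, ψ_σ, ψ_α, ψ_β` are linearly independent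
as functions of `t`: if a real linear combination of them vanishes for all `t ≠ 0`, then all
coefficients vanish.  This holds for every `θ ∈ Θ_M°` (in all cases `α ≠ 1`, `α = 1`,
`β = 0`, `β ≠ 0`). -/
theorem cumulant_derivs_linearIndependent
    (θ : Fin 4 → ℝ) (hθ : θ ∈ ThetaInt) (a : Fin 4 → ℝ)
    (h : ∀ t : ℝ, t ≠ 0 → ∑ i : Fin 4, (a i : ℂ) * psiP i θ t = 0) :
    a = 0 :=
  cumulant_derivs_linearIndependent_general hθ.1 hθ.2.1 one_pos two_pos one_lt_two.ne
    (h 1 one_ne_zero) (h 2 two_ne_zero)
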